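/- For every integer n, the identity −X_{2n}(−x,−t) − y = (y−2)·(S_n(t) + (y+1−x²)·S_{n−1}(t))·((y+1−x²)·S_{n−1}(t) + S_{n−2}(t)) holds in ℂ[x,y], where t = y² − y·x² + 2x² − 2. -/

import Mathlib

open Polynomial

/-- The Chebyshev-like polynomials `S n ∈ R[X]` defined by `S 0 = 1`, `S 1 = X` and
`S (n+1) = X * S n - S (n-1)` for all `n : ℤ`. -/
noncomputable def S (R : Type*) [CommRing R] : ℤ → R[X]
  | 0 => 1
  | 1 => X
  | (n : ℕ) + 2 => X * S R (n + 1) - S R n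
  | -((n : ℕ) + 1) => X * S R (-n) - S R (-n + 1)
  termination_by n => Int.natAbs n + Int.natAbs (n - 1)

/-- The variable `x` of `ℂ[x,y]`, realized as `MvPolynomial (Fin 2) ℂ`. -/
noncomputable def xP : MvPolynomial (Fin 2) ℂ := MvPolynomial.X 0

/-- The variable `y` of `ℂ[x,y]`. -/
noncomputable def yP : MvPolynomial (Fin 2) ℂ := MvPolynomial.X 1

/-- The polynomials `X_m ∈ ℂ[x,y]` defined by `X_0 = -2`, `X_1 = -x^2 - y` and
`X_{m+1} = y * X_m - X_{m-1} - 2x^2` for all `m : ℤ`. -/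
noncomputable def Xp : ℤ → MvPolynomial (Fin 2) ℂ
  | 0 => -2
  | 1 => -(MvPolynomial.X 0) ^ 2 - MvPolynomial.X 1
  | (m : ℕ) + 2 => MvPolynomial.X 1 * Xp (m + 1) - Xp m - 2 * (MvPolynomial.X 0) ^ 2
  | -((m : ℕ) + 1) => MvPolynomial.X 1 * Xp (-m) - Xp (-m + 1) - 2 * (MvPolynomial.X 0) ^ 2
  termination_by m => Int.natAbs m + Int.natAbs (m - 1)

/-- The polynomial `t(x,y) = y^2 - y x^2 + 2 x^2 - 2 ∈ ℂ[x,y]`. -/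
noncomputable def tP : MvPolynomial (Fin 2) ℂ := yP ^ 2 - yP * xP ^ 2 + 2 * xP ^ 2 - 2

/-- The substitution homomorphism of `ℂ[x,y]` sending `x ↦ -x` and `y ↦ -t(x,y)`. -/
noncomputable def φ : MvPolynomial (Fin 2) ℂ →ₐ[ℂ] MvPolynomial (Fin 2) ℂ :=
  MvPolynomial.aeval ![-xP, -tP]

/-!
As functions of `n`, both sides of the identity satisfy the same affine recurrence
`u (n + 2) = (t ^ 2 - 2) * u (n + 1) - u n + c`, so it suffices to compare them at `n = 0` and
`n = 1`. Passing to even indices turns the recurrence of `X_m(-x, -t)`, whose coefficient is `-t`,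
into one with coefficient `t ^ 2 - 2`. On the right, the product of two solutions of the homogeneous
recurrence with coefficient `t` satisfies one with coefficient `t ^ 2 - 2`: its inhomogeneity is the
polar form of an invariant quadratic form, hence constant.
-/

/-- The second-order recurrence of the Chebyshev polynomials `S n` and `C n` at the point `s`, with
a constant inhomogeneity `c`, for sequences indexed by `ℤ`. -/
def IsChebyshevRec {A : Type*} [CommRing A] (s c : A) (u : ℤ → A) : Prop :=
  ∀ n, u (n + 2) = s * u (n + 1) - u n + c

namespace IsChebyshevRec

variable {A : Type*} [CommRing A] {s c d : A} {u v : ℤ → A}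

theorem const (s a : A) : IsChebyshevRec s ((2 - s) * a) fun _ => a := fun _ => by ring

theorem eval_S (s : A) : IsChebyshevRec s 0 fun n => (Chebyshev.S A n).eval s := fun n => by
  simp [Chebyshev.S_add_two]

theorem add (hu : IsChebyshevRec s c u) (hv : IsChebyshevRec s d v) :
    IsChebyshevRec s (c + d) fun n => u n + v n := fun n => by
  linear_combination hu n + hv n

theorem const_mul (a : A) (hu : IsChebyshevRec s c u) :
    IsChebyshevRec s (a * c) fun n => a * u n := fun n => by
  linear_combination a * hu n

theorem comp_sub_const (hu : IsChebyshevRec s c u) (k : ℤ) :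
    IsChebyshevRec s c fun n => u (n - k) := fun n => by
  simpa only [sub_add_eq_add_sub] using hu (n - k)

theorem comp_two_mul (hu : IsChebyshevRec s c u) :
    IsChebyshevRec (s ^ 2 - 2) ((s + 2) * c) fun n => u (2 * n) := fun n => by
  have h₂ := hu (2 * n)
  have h₃ : u (2 * n + 3) = s * u (2 * n + 2) - u (2 * n + 1) + c := by
    simpa only [add_assoc, Int.reduceAdd] using hu (2 * n + 1)
  have h₄ : u (2 * n + 4) = s * u (2 * n + 3) - u (2 * n + 2) + c := by
    simpa only [add_assoc, Int.reduceAdd] using hu (2 * n + 2)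
  simp only [mul_add, mul_one, Int.reduceMul]
  linear_combination h₄ + s * h₃ + h₂

/-- Both sides are the polar form of the quadratic form `p ^ 2 + q ^ 2 - s * p * q`, which is
invariant under the step `(p, q) ↦ (q, s * q - p)` of the homogeneous recurrence. -/
theorem polar_eq_polar_zero (hu : IsChebyshevRec s 0 u) (hv : IsChebyshevRec s 0 v) (n : ℤ) :
    2 * (u n * v n + u (n + 1) * v (n + 1)) - s * (u n * v (n + 1) + u (n + 1) * v n) =
      2 * (u 0 * v 0 + u 1 * v 1) - s * (u 0 * v 1 + u 1 * v 0) := by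
  let B : ℤ → A := fun n =>
    2 * (u n * v n + u (n + 1) * v (n + 1)) - s * (u n * v (n + 1) + u (n + 1) * v n)
  have hB : Function.Periodic B 1 := fun n => by
    simp only [B, add_assoc, one_add_one_eq_two, hu n, hv n]
    ring
  simpa [B] using hB.int_mul_eq n

theorem mul (hu : IsChebyshevRec s 0 u) (hv : IsChebyshevRec s 0 v) :
    IsChebyshevRec (s ^ 2 - 2) (2 * (u 0 * v 0 + u 1 * v 1) - s * (u 0 * v 1 + u 1 * v 0))
      fun n => u n * v n := fun n => by
  rw [← hu.polar_eq_polar_zero hv n]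
  simp only [hu n, hv n]
  ring

theorem eq_of_eq_zero_of_eq_one (hu : IsChebyshevRec s c u) (hv : IsChebyshevRec s c v)
    (h₀ : u 0 = v 0) (h₁ : u 1 = v 1) (n : ℤ) : u n = v n := by
  induction n using Chebyshev.induct with
  | zero => exact h₀
  | one => exact h₁
  | add_two n ih₁ ih₀ => rw [hu, hv, ih₁, ih₀]
  | neg_add_one n ih₀ ih₁ =>
    have hu' := hu (-n - 1)
    have hv' := hv (-n - 1)
    rw [show (-n - 1 + 2 : ℤ) = -n + 1 by ring, sub_add_cancel] at hu' hv'
    linear_combination hu' - hv' + s * ih₀ - ih₁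

theorem eval_S_mul_eval_S (s k : A) :
    IsChebyshevRec (s ^ 2 - 2) (s ^ 2 + 2 * s * k + 2 * k ^ 2 - 2) fun n =>
      ((Chebyshev.S A n).eval s + k * (Chebyshev.S A (n - 1)).eval s)
        * (k * (Chebyshev.S A (n - 1)).eval s + (Chebyshev.S A (n - 2)).eval s) := by
  have hS := eval_S s
  have hkS : IsChebyshevRec s 0 fun n => k * (Chebyshev.S A (n - 1)).eval s := by
    simpa only [mul_zero] using (hS.comp_sub_const 1).const_mul k
  have h_left := hS.add hkS
  have h_right := hkS.add (hS.comp_sub_const 2)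
  rw [add_zero] at h_left h_right
  convert h_left.mul h_right using 1
  simp only [sub_self, zero_sub, Int.reduceSub, Chebyshev.S_zero, Chebyshev.S_one,
    Chebyshev.S_neg_one, Chebyshev.S_neg_two, eval_one, eval_X, eval_zero, eval_neg]
  ring

end IsChebyshevRec

theorem S_eq_chebyshev_S (R : Type*) [CommRing R] (n : ℤ) : S R n = Chebyshev.S R n := by
  induction n using Chebyshev.induct with
  | zero => simp [S]
  | one => simp [S]
  | add_two n ih₁ ih₀ =>
    rw [Chebyshev.S_add_two, ← ih₁, ← ih₀]
    exact S.eq_3 R n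
  | neg_add_one n ih₀ ih₁ =>
    rw [Chebyshev.S_sub_one, ← ih₀, ← ih₁, ← neg_add', ← Int.negSucc_eq]
    exact S.eq_4 R n

theorem isChebyshevRec_Xp : IsChebyshevRec yP (-2 * xP ^ 2) Xp
  | (k : ℕ) => by
    have h : Xp (k + 2) = yP * Xp (k + 1) - Xp k - 2 * xP ^ 2 := Xp.eq_3 k
    linear_combination h
  | -(k + 1 : ℕ) => by
    have h : Xp (-(k + 1 : ℕ)) = yP * Xp (-k) - Xp (-k + 1) - 2 * xP ^ 2 := Xp.eq_4 k
    rw [show -((k + 1 : ℕ) : ℤ) + 2 = -k + 1 by lia, show -((k + 1 : ℕ) : ℤ) + 1 = -k by lia]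
    linear_combination h

theorem φ_xP : φ xP = -xP := by simp [φ, xP]

theorem φ_yP : φ yP = -tP := by simp [φ, yP]

theorem isChebyshevRec_φ_Xp : IsChebyshevRec (-tP) (-2 * xP ^ 2) fun m => φ (Xp m) := fun m => by
  simp [isChebyshevRec_Xp m, φ_xP, φ_yP, map_ofNat]

theorem φ_Xp_zero : φ (Xp 0) = -2 := by simp [Xp, map_ofNat]

theorem φ_Xp_one : φ (Xp 1) = tP - xP ^ 2 := by
  rw [show Xp 1 = -xP ^ 2 - yP from Xp.eq_2, map_sub, map_neg, map_pow, φ_xP, φ_yP]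
  ring

theorem Xp_even_substitution_general {A : Type*} [CommRing A] {x y t : A} {w : ℤ → A}
    (ht : t = y ^ 2 - y * x ^ 2 + 2 * x ^ 2 - 2) (hw : IsChebyshevRec (-t) (-2 * x ^ 2) w)
    (hw₀ : w 0 = -2) (hw₁ : w 1 = t - x ^ 2) (n : ℤ) :
    -w (2 * n) - y =
      (y - 2) * ((Chebyshev.S A n).eval t + (y + 1 - x ^ 2) * (Chebyshev.S A (n - 1)).eval t)
        * ((y + 1 - x ^ 2) * (Chebyshev.S A (n - 1)).eval t + (Chebyshev.S A (n - 2)).eval t) := by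
  let F : ℤ → A := fun n =>
    ((Chebyshev.S A n).eval t + (y + 1 - x ^ 2) * (Chebyshev.S A (n - 1)).eval t)
      * ((y + 1 - x ^ 2) * (Chebyshev.S A (n - 1)).eval t + (Chebyshev.S A (n - 2)).eval t)
  have hF₀ : F 0 = -1 := by simp [F]
  have hF₁ : F 1 = (t + (y + 1 - x ^ 2)) * (y + 1 - x ^ 2) := by simp [F]
  have hF : IsChebyshevRec ((-t) ^ 2 - 2) ((-t + 2) * (-2 * x ^ 2))
      fun n => (2 - y) * F n + -y := by
    convert ((IsChebyshevRec.eval_S_mul_eval_S t (y + 1 - x ^ 2)).const_mul (2 - y)).add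
      (.const _ (-y)) using 1
    · ring
    · rw [ht]
      ring
  have hw₂ : w 2 = (t - x ^ 2) * -t + 2 - 2 * x ^ 2 := by
    rw [show w 2 = -t * w 1 - w 0 + -2 * x ^ 2 from hw 0, hw₀, hw₁]
    ring
  have h₀ : w 0 = (2 - y) * F 0 + -y := by linear_combination hw₀ - (2 - y) * hF₀
  have h₁ : w 2 = (2 - y) * F 1 + -y := by
    rw [hw₂, hF₁, ht]
    ring
  linear_combination -(hw.comp_two_mul.eq_of_eq_zero_of_eq_one hF h₀ h₁ n)

/-- `-X_{2n}(-x,-t) - y = (y-2) (S_n(t) + (y+1-x^2) S_{n-1}(t)) ((y+1-x^2) S_{n-1}(t) + S_{n-2}(t))`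
for every integer `n`, where `t = y^2 - y x^2 + 2x^2 - 2`. -/
theorem Xp_even_substitution (n : ℤ) :
    -φ (Xp (2 * n)) - yP =
      (yP - 2) * (aeval tP (S ℂ n) + (yP + 1 - xP ^ 2) * aeval tP (S ℂ (n - 1)))
        * ((yP + 1 - xP ^ 2) * aeval tP (S ℂ (n - 1)) + aeval tP (S ℂ (n - 2))) := by
  simpa only [S_eq_chebyshev_S, Chebyshev.aeval_S] using
    Xp_even_substitution_general tP.eq_1 isChebyshevRec_φ_Xp φ_Xp_zero φ_Xp_one n
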